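/- There exist constants ε₀, ν₀ ∈ (0,1) and C > 0, independent of ν, k, λ and ε, such that for every 0 < ν ≤ ν₀, every 0 ≤ ε ≤ ε₀, every k = (k₁,k₃) ∈ ℤ² with |k₁| ≥ 1, every λ of the form λ = λ_r − i ε ν^{1/2}|k₁|^{−1/2} with λ_r ∈ ℝ, every F ∈ L²(I), and every solution w ∈ H²(I) of the Orr–Sommerfeld problem with Navier-slip boundary conditions and right-hand side F, one has ν^{2/3}|k₁|^{1/3}( |λ−1|^{1/2} + |ν/k₁|^{1/4} )^{1/3} ‖(∂_y,|k|)w‖_{L²} + ν^{1/3}|k₁|^{2/3}( |λ−1|^{1/2} + |ν/k₁|^{1/4} )^{2/3} ‖w‖_{L²} ≤ C ‖F‖_{L²}, where |λ−1| denotes the modulus of the complex number λ−1. -/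

import Mathlib

open Real MeasureTheory

noncomputable section

/-- `|k| = sqrt (k₁² + k₃²)` for `k = (k₁,k₃) ∈ ℤ²`. -/
def kabs (k₁ k₃ : ℤ) : ℝ := Real.sqrt ((k₁ : ℝ) ^ 2 + (k₃ : ℝ) ^ 2)

/-- The `L²` norm on the interval `(-1,1)`. -/
def l2 (f : ℝ → ℂ) : ℝ := Real.sqrt (∫ y in (-1:ℝ)..1, ‖f y‖ ^ 2)

/-- `‖(∂_y,|k|)f‖_{L²} = (‖f'‖² + |k|²‖f‖²)^{1/2}`. -/
def hk (k₁ k₃ : ℤ) (f : ℝ → ℂ) : ℝ :=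
  Real.sqrt ((∫ y in (-1:ℝ)..1, ‖deriv f y‖ ^ 2) +
    (kabs k₁ k₃) ^ 2 * ∫ y in (-1:ℝ)..1, ‖f y‖ ^ 2)

/-- The Orr–Sommerfeld problem with Navier-slip boundary conditions and a
(possibly complex) spectral parameter `λ`:
`-ν(∂_y² - |k|²)w + ik₁[(1-y²-λ)w + 2φ] = F` on `[-1,1]`, where
`(∂_y² - |k|²)φ = w`, `φ(±1) = φ''(±1) = 0`. -/
def OSslip (ν : ℝ) (k₁ k₃ : ℤ) (lam : ℂ) (w φ F : ℝ → ℂ) : Prop :=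
  ContDiff ℝ 2 w ∧ ContDiff ℝ 2 φ ∧
  (∀ y ∈ Set.Icc (-1:ℝ) 1,
    -(ν : ℂ) * (deriv (deriv w) y - ((kabs k₁ k₃ : ℝ) : ℂ) ^ 2 * w y) +
      Complex.I * (k₁ : ℂ) * ((1 - (y : ℂ) ^ 2 - lam) * w y + 2 * φ y) = F y) ∧
  (∀ y ∈ Set.Icc (-1:ℝ) 1,
    deriv (deriv φ) y - ((kabs k₁ k₃ : ℝ) : ℂ) ^ 2 * φ y = w y) ∧
  φ (-1) = 0 ∧ φ 1 = 0 ∧ deriv (deriv φ) (-1) = 0 ∧ deriv (deriv φ) 1 = 0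

/-!
Write `r = (β - y²)w + 2φ`, with `β = 1 - Re λ`, for the inviscid operator, and `v = y w - φ'` for
the field in `∂_y r = (β - y²)w' - 2v`.  Slip boundary conditions make `w`, `φ` and `r` vanish at
the walls, so the equation may be paired with `w`, `i r` and `r` without boundary terms.  These
pairings control `‖w'‖`, `‖r‖` and `‖y w'‖`, while integrations by parts in `r` alone bound `‖v‖²`
and `|β| ‖w‖²` by products of `‖r‖`, `‖w‖` and `‖y w'‖`; near the critical value `β = 0` the last
bound is replaced by `‖w‖ ≤ 2 ‖y w'‖`.

Up to a constant, `m = |λ - 1|^{1/2} + n^{1/4}`, with `n = ν/|k₁|`, is the slope of the flow at the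
critical layer, and `δ = (n/m)^{1/3}` is the thickness of that layer.  In these units the
inequalities form a closed algebraic system with absolute constants, which gives
`m δ ‖w‖ ≲ ‖F‖/|k₁|`; pairing with `w` once more bounds the gradient.  Since `√n ≤ m δ`, an
imaginary part of `λ` of size `ε √n` is absorbed.
-/

section EnergyMethod

open scoped InnerProductSpace RealInnerProductSpace

variable {E : Type*} [NormedAddCommGroup E]

/-- The `L²(-1, 1)` norm of a vector-valued function; on complex-valued functions it is `l2`. -/
def l2Norm (f : ℝ → E) : ℝ := √(∫ y in (-1 : ℝ)..1, ‖f y‖ ^ 2)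

theorem l2Norm_nonneg (f : ℝ → E) : 0 ≤ l2Norm f := Real.sqrt_nonneg _

theorem l2Norm_sq (f : ℝ → E) : l2Norm f ^ 2 = ∫ y in (-1 : ℝ)..1, ‖f y‖ ^ 2 :=
  Real.sq_sqrt (intervalIntegral.integral_nonneg (by norm_num) fun _ _ => sq_nonneg _)

theorem l2Norm_congr {F : Type*} [NormedAddCommGroup F] {f : ℝ → E} {g : ℝ → F}
    (h : ∀ y ∈ Set.Icc (-1 : ℝ) 1, ‖f y‖ = ‖g y‖) : l2Norm f = l2Norm g := by
  refine congrArg Real.sqrt (intervalIntegral.integral_congr fun y hy => ?_)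
  rw [Set.uIcc_of_le (by norm_num)] at hy
  simp only [h y hy]

theorem l2Norm_const_smul [NormedSpace ℝ E] (c : ℝ) (f : ℝ → E) :
    l2Norm (fun y => c • f y) = |c| * l2Norm f := by
  simp only [l2Norm, norm_smul, mul_pow, intervalIntegral.integral_const_mul, Real.norm_eq_abs]
  rw [Real.sqrt_mul (sq_nonneg _), Real.sqrt_sq (abs_nonneg c)]

theorem integral_add_of_continuous {f g : ℝ → ℝ} (hf : Continuous f) (hg : Continuous g)
    (a b : ℝ) : ∫ y in a..b, (f y + g y) = (∫ y in a..b, f y) + ∫ y in a..b, g y :=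
  intervalIntegral.integral_add (hf.intervalIntegrable _ _) (hg.intervalIntegrable _ _)

theorem integral_eq_of_hasDerivAt_sub {f g G : ℝ → ℝ} {a b : ℝ} (hab : a ≤ b)
    (hf : Continuous f) (hg : Continuous g)
    (hG : ∀ y ∈ Set.Icc a b, HasDerivAt G (f y - g y) y) (hGab : G a = G b) :
    ∫ y in a..b, f y = ∫ y in a..b, g y := by
  rw [← Set.uIcc_of_le hab] at hG
  have h := intervalIntegral.integral_eq_sub_of_hasDerivAt hG
    ((hf.sub hg).intervalIntegrable _ _)
  rwa [hGab, sub_self, intervalIntegral.integral_sub (hf.intervalIntegrable _ _)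
    (hg.intervalIntegrable _ _), sub_eq_zero] at h

theorem l2Norm_id_smul_le [NormedSpace ℝ E] {f : ℝ → E} (hf : Continuous f) :
    l2Norm (fun y => y • f y) ≤ l2Norm f := by
  refine Real.sqrt_le_sqrt (intervalIntegral.integral_mono_on (by norm_num)
    ((by fun_prop : Continuous fun y => ‖y • f y‖ ^ 2).intervalIntegrable _ _)
    ((by fun_prop : Continuous fun y => ‖f y‖ ^ 2).intervalIntegrable _ _) fun y hy => ?_)
  rw [norm_smul]
  gcongr
  exact mul_le_of_le_one_left (norm_nonneg _) (abs_le.mpr hy)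

variable [InnerProductSpace ℝ E]

theorem inner_map_eq_neg {J : E →L[ℝ] E} (hJ : ∀ u, ⟪J u, u⟫ = 0) (u v : E) :
    ⟪u, J v⟫ = -⟪J u, v⟫ := by
  have polarized := hJ (u + v)
  simp only [map_add, inner_add_left, inner_add_right, hJ] at polarized
  linarith [real_inner_comm u (J v)]

/-- The real `L²(-1, 1)` inner product of vector-valued functions. -/
def l2Inner (f g : ℝ → E) : ℝ := ∫ y in (-1 : ℝ)..1, ⟪f y, g y⟫

theorem abs_l2Inner_le {f g : ℝ → E} (hf : Continuous f) (hg : Continuous g) :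
    |l2Inner f g| ≤ l2Norm f * l2Norm g := by
  have hle : (-1 : ℝ) ≤ 1 := by norm_num
  have memLp_two {h : ℝ → E} (hh : Continuous h) :
      MemLp h (ENNReal.ofReal 2) (volume.restrict (Set.Ioc (-1) 1)) := by
    rw [ENNReal.ofReal_ofNat, memLp_two_iff_integrable_sq_norm hh.aestronglyMeasurable]
    exact ((hh.norm.pow 2).intervalIntegrable (-1) 1).1
  calc |l2Inner f g| ≤ ∫ y in (-1 : ℝ)..1, ‖f y‖ * ‖g y‖ :=
        (intervalIntegral.abs_integral_le_integral_abs hle).trans <|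
          intervalIntegral.integral_mono_on hle ((hf.inner hg).abs.intervalIntegrable _ _)
            ((hf.norm.mul hg.norm).intervalIntegrable _ _) fun _ _ => abs_real_inner_le_norm _ _
    _ ≤ l2Norm f * l2Norm g := by
        simpa [l2Norm, intervalIntegral.integral_of_le hle, Real.sqrt_eq_rpow] using
          integral_mul_norm_le_Lp_mul_Lq Real.HolderConjugate.two_two (memLp_two hf) (memLp_two hg)

theorem l2Inner_le {f g : ℝ → E} (hf : Continuous f) (hg : Continuous g) :
    l2Inner f g ≤ l2Norm f * l2Norm g :=
  (le_abs_self _).trans (abs_l2Inner_le hf hg)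

theorem l2Norm_add_le {f g : ℝ → E} (hf : Continuous f) (hg : Continuous g) :
    l2Norm (fun y => f y + g y) ≤ l2Norm f + l2Norm g := by
  have expand : l2Norm (fun y => f y + g y) ^ 2
      = l2Norm f ^ 2 + 2 * l2Inner f g + l2Norm g ^ 2 := by
    simp only [l2Norm_sq, l2Inner, norm_add_sq_real]
    rw [integral_add_of_continuous (by fun_prop) (by fun_prop),
      integral_add_of_continuous (by fun_prop) (by fun_prop), intervalIntegral.integral_const_mul]
  refine le_of_sq_le_sq ?_ (add_nonneg (l2Norm_nonneg f) (l2Norm_nonneg g))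
  linarith [l2Inner_le hf hg]

/-! ### The operators of the Orr–Sommerfeld problem -/

/-- The Rayleigh operator `(β - y²)w + 2φ` of the shear flow `1 - y²`, where `β = 1 - Re λ`. -/
def rayleigh (β : ℝ) (w φ : ℝ → E) (y : ℝ) : E := (β - y ^ 2) • w y + (2 : ℝ) • φ y

/-- The field `y w - φ'`.  It measures how far the Rayleigh operator is from commuting with `∂_y`:
`∂_y (rayleigh β w φ) = (β - y²)w' - 2 (y w - φ')`. -/
def rayleighCommutator (w φ : ℝ → E) (y : ℝ) : E := y • w y - deriv φ y

/-- The Orr–Sommerfeld operator `-n(∂_y² - α²)w + J((β - y²)w + 2φ)`, with viscosity `n` and the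
multiplication by `i k₁/|k₁|` replaced by an operator `J` on the space of values. -/
def orrSommerfeld (n α β : ℝ) (J : E →L[ℝ] E) (w φ : ℝ → E) (y : ℝ) : E :=
  -n • (deriv (deriv w) y - α ^ 2 • w y) + J (rayleigh β w φ y)

/-- The norm `‖(∂_y, α)f‖ = (‖f'‖² + α²‖f‖²)^{1/2}` on `L²(-1, 1)`. -/
def l2GradNorm (α : ℝ) (f : ℝ → E) : ℝ := √(l2Norm (deriv f) ^ 2 + α ^ 2 * l2Norm f ^ 2)

theorem l2GradNorm_sq (α : ℝ) (f : ℝ → E) :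
    l2GradNorm α f ^ 2 = l2Norm (deriv f) ^ 2 + α ^ 2 * l2Norm f ^ 2 :=
  Real.sq_sqrt (by positivity)

theorem l2Norm_deriv_le_l2GradNorm (α : ℝ) (f : ℝ → E) : l2Norm (deriv f) ≤ l2GradNorm α f :=
  Real.le_sqrt_of_sq_le (le_add_of_nonneg_right (by positivity))

theorem l2Norm_le_two_mul_l2Norm_id_smul_deriv {w : ℝ → E} (hw : ContDiff ℝ 1 w)
    (hl : w (-1) = 0) (hr : w 1 = 0) : l2Norm w ≤ 2 * l2Norm (fun y => y • deriv w y) := by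
  have := hw.continuous_deriv le_rfl
  have hwc := hw.continuous
  have ibp : l2Norm w ^ 2 = -2 * l2Inner w (fun y => y • deriv w y) := by
    rw [l2Norm_sq, l2Inner, ← intervalIntegral.integral_const_mul]
    refine integral_eq_of_hasDerivAt_sub (G := fun y => y * ‖w y‖ ^ 2) (by norm_num)
      (by fun_prop) (by fun_prop) (fun y _ => ?_) (by simp [hl, hr])
    refine ((hasDerivAt_id y).mul (hw.differentiable one_ne_zero y).hasDerivAt.norm_sq).congr_deriv
      ?_
    simp only [id, real_inner_smul_right]
    ring
  have cauchy_schwarz := neg_le_of_abs_le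
    (abs_l2Inner_le hwc (show Continuous fun y => y • deriv w y by fun_prop))
  have self_bound : l2Norm w * l2Norm w ≤ 2 * l2Norm (fun y => y • deriv w y) * l2Norm w := by
    linarith
  rcases (l2Norm_nonneg w).eq_or_lt with hzero | hpos
  · linarith [l2Norm_nonneg fun y => y • deriv w y]
  · exact le_of_mul_le_mul_right self_bound hpos

/-- A vorticity `w` and its stream function `φ`: `(∂_y² - α²)φ = w` on `[-1, 1]`, and both vanish
at `±1`. -/
structure IsStreamPair (α : ℝ) (w φ : ℝ → E) : Prop where
  contDiff_vorticity : ContDiff ℝ 2 w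
  contDiff_stream : ContDiff ℝ 2 φ
  helmholtz : ∀ y ∈ Set.Icc (-1 : ℝ) 1, deriv (deriv φ) y = w y + α ^ 2 • φ y
  vorticity_left : w (-1) = 0
  vorticity_right : w 1 = 0
  stream_left : φ (-1) = 0
  stream_right : φ 1 = 0

namespace IsStreamPair

variable {n α β : ℝ} {w φ : ℝ → E} {J : E →L[ℝ] E}

section Regularity

theorem contDiff_deriv_vorticity (h : IsStreamPair α w φ) : ContDiff ℝ 1 (deriv w) :=
  ContDiff.deriv' h.contDiff_vorticity

theorem contDiff_deriv_stream (h : IsStreamPair α w φ) : ContDiff ℝ 1 (deriv φ) :=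
  ContDiff.deriv' h.contDiff_stream

theorem hasDerivAt_vorticity (h : IsStreamPair α w φ) (y : ℝ) : HasDerivAt w (deriv w y) y :=
  (h.contDiff_vorticity.differentiable two_ne_zero y).hasDerivAt

theorem hasDerivAt_deriv_vorticity (h : IsStreamPair α w φ) (y : ℝ) :
    HasDerivAt (deriv w) (deriv (deriv w) y) y :=
  (h.contDiff_deriv_vorticity.differentiable one_ne_zero y).hasDerivAt

theorem hasDerivAt_stream (h : IsStreamPair α w φ) (y : ℝ) : HasDerivAt φ (deriv φ y) y :=
  (h.contDiff_stream.differentiable two_ne_zero y).hasDerivAt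

theorem hasDerivAt_deriv_stream (h : IsStreamPair α w φ) {y : ℝ} (hy : y ∈ Set.Icc (-1 : ℝ) 1) :
    HasDerivAt (deriv φ) (w y + α ^ 2 • φ y) y :=
  h.helmholtz y hy ▸ (h.contDiff_deriv_stream.differentiable one_ne_zero y).hasDerivAt

theorem continuous_vorticity (h : IsStreamPair α w φ) : Continuous w :=
  h.contDiff_vorticity.continuous

theorem continuous_deriv_vorticity (h : IsStreamPair α w φ) : Continuous (deriv w) :=
  h.contDiff_deriv_vorticity.continuous

theorem continuous_stream (h : IsStreamPair α w φ) : Continuous φ := h.contDiff_stream.continuous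

theorem continuous_deriv_stream (h : IsStreamPair α w φ) : Continuous (deriv φ) :=
  h.contDiff_deriv_stream.continuous

theorem continuous_rayleigh (h : IsStreamPair α w φ) (β : ℝ) : Continuous (rayleigh β w φ) := by
  have := h.continuous_vorticity
  have := h.continuous_stream
  unfold rayleigh
  fun_prop

theorem continuous_rayleighCommutator (h : IsStreamPair α w φ) :
    Continuous (rayleighCommutator w φ) := by
  have := h.continuous_vorticity
  have := h.continuous_deriv_stream
  unfold rayleighCommutator
  fun_prop

theorem continuous_orrSommerfeld (h : IsStreamPair α w φ) (n β : ℝ) (J : E →L[ℝ] E) :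
    Continuous (orrSommerfeld n α β J w φ) := by
  have := h.continuous_vorticity
  have := h.contDiff_deriv_vorticity.continuous_deriv le_rfl
  have := h.continuous_rayleigh β
  unfold orrSommerfeld
  fun_prop

theorem hasDerivAt_rayleigh (h : IsStreamPair α w φ) (β y : ℝ) :
    HasDerivAt (rayleigh β w φ)
      ((β - y ^ 2) • deriv w y - (2 : ℝ) • rayleighCommutator w φ y) y := by
  have coeff : HasDerivAt (fun t : ℝ => β - t ^ 2) (-(2 * y)) y := by
    simpa using (hasDerivAt_pow 2 y).const_sub β
  refine ((coeff.smul (h.hasDerivAt_vorticity y)).add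
    ((h.hasDerivAt_stream y).const_smul (2 : ℝ))).congr_deriv ?_
  rw [rayleighCommutator]
  module

theorem rayleigh_left (h : IsStreamPair α w φ) (β : ℝ) : rayleigh β w φ (-1) = 0 := by
  simp [rayleigh, h.vorticity_left, h.stream_left]

theorem rayleigh_right (h : IsStreamPair α w φ) (β : ℝ) : rayleigh β w φ 1 = 0 := by
  simp [rayleigh, h.vorticity_right, h.stream_right]

end Regularity

/-! ### Energy identities -/

theorem l2Inner_orrSommerfeld_vorticity (h : IsStreamPair α w φ) (hJ : ∀ u, ⟪J u, u⟫ = 0) :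
    l2Inner (orrSommerfeld n α β J w φ) w = n * l2GradNorm α w ^ 2 := by
  have := h.continuous_vorticity
  have := h.continuous_deriv_vorticity
  have := h.continuous_orrSommerfeld n β J
  have integrated : ∫ y in (-1 : ℝ)..1, ⟪orrSommerfeld n α β J w φ y, w y⟫
      = ∫ y in (-1 : ℝ)..1, n * (‖deriv w y‖ ^ 2 + α ^ 2 * ‖w y‖ ^ 2) := by
    refine integral_eq_of_hasDerivAt_sub (by norm_num) (by fun_prop) (by fun_prop)
      (G := fun y => 2 * ⟪J (φ y), deriv φ y⟫ - n * ⟪deriv w y, w y⟫) (fun y hy => ?_)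
      (by simp [h.vorticity_left, h.vorticity_right, h.stream_left, h.stream_right])
    refine ((((J.hasFDerivAt.comp_hasDerivAt y (h.hasDerivAt_stream y)).inner ℝ
      (h.hasDerivAt_deriv_stream hy)).const_mul 2).sub
      (((h.hasDerivAt_deriv_vorticity y).inner ℝ
        (h.hasDerivAt_vorticity y)).const_mul n)).congr_deriv ?_
    simp only [orrSommerfeld, rayleigh, map_add, map_smul, inner_add_left, inner_add_right,
      inner_sub_left, real_inner_smul_left, real_inner_smul_right, hJ,
      real_inner_self_eq_norm_sq, Function.comp_apply]
    ring
  rw [l2Inner, integrated, intervalIntegral.integral_const_mul,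
    integral_add_of_continuous (by fun_prop) (by fun_prop), intervalIntegral.integral_const_mul,
    l2GradNorm_sq, l2Norm_sq, l2Norm_sq]

theorem l2Norm_rayleigh_sq (h : IsStreamPair α w φ) (hJ : ∀ u, ⟪J u, u⟫ = 0)
    (hJ_norm : ∀ u, ‖J u‖ = ‖u‖) :
    l2Norm (rayleigh β w φ) ^ 2
      = l2Inner (orrSommerfeld n α β J w φ) (J ∘ rayleigh β w φ)
        + 2 * n * l2Inner (deriv w) (J ∘ rayleighCommutator w φ) := by
  have := h.continuous_deriv_vorticity
  have := h.continuous_rayleigh β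
  have := h.continuous_rayleighCommutator
  have := h.continuous_orrSommerfeld n β J
  have integrated : ∫ y in (-1 : ℝ)..1, ‖rayleigh β w φ y‖ ^ 2
      = ∫ y in (-1 : ℝ)..1, (⟪orrSommerfeld n α β J w φ y, J (rayleigh β w φ y)⟫
        + 2 * n * ⟪deriv w y, J (rayleighCommutator w φ y)⟫) := by
    refine integral_eq_of_hasDerivAt_sub (by norm_num) (by fun_prop) (by fun_prop)
      (G := fun y => n * (⟪deriv w y, J (rayleigh β w φ y)⟫
        - 2 * α ^ 2 * ⟪deriv φ y, J (φ y)⟫)) (fun y hy => ?_)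
      (by simp [h.rayleigh_left, h.rayleigh_right, h.stream_left, h.stream_right])
    refine ((((h.hasDerivAt_deriv_vorticity y).inner ℝ
      (J.hasFDerivAt.comp_hasDerivAt y (h.hasDerivAt_rayleigh β y))).sub
      (((h.hasDerivAt_deriv_stream hy).inner ℝ
        (J.hasFDerivAt.comp_hasDerivAt y (h.hasDerivAt_stream y))).const_mul
          (2 * α ^ 2))).const_mul n).congr_deriv ?_
    have inner_J_rayleigh : ⟪w y, J (rayleigh β w φ y)⟫ = 2 * ⟪w y, J (φ y)⟫ := by
      simp only [rayleigh, map_add, map_smul, inner_add_right, real_inner_smul_right,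
        inner_map_eq_neg hJ (w y), hJ]
      ring
    simp only [orrSommerfeld, map_sub, map_smul, inner_add_left, inner_sub_left, inner_sub_right,
      real_inner_smul_left, real_inner_smul_right, real_inner_self_eq_norm_sq, hJ_norm,
      Function.comp_apply, inner_J_rayleigh, inner_map_eq_neg hJ (deriv w y),
      inner_map_eq_neg hJ (deriv φ y), inner_map_eq_neg hJ (φ y), hJ]
    ring
  rw [l2Norm_sq, integrated, integral_add_of_continuous (by fun_prop) (by fun_prop),
    intervalIntegral.integral_const_mul]
  rfl

theorem l2Inner_orrSommerfeld_rayleigh (h : IsStreamPair α w φ) (hJ : ∀ u, ⟪J u, u⟫ = 0) :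
    l2Inner (orrSommerfeld n α β J w φ) (rayleigh β w φ)
      = β * (n * l2GradNorm α w ^ 2)
        - n * (l2Norm (fun y => y • deriv w y) ^ 2 + α ^ 2 * l2Norm (fun y => y • w y) ^ 2
          + l2Norm w ^ 2) := by
  have := h.continuous_vorticity
  have := h.continuous_deriv_vorticity
  have := h.continuous_rayleigh β
  have := h.continuous_orrSommerfeld n β J
  have integrated : ∫ y in (-1 : ℝ)..1,
        (n * (‖y • deriv w y‖ ^ 2 + α ^ 2 * ‖y • w y‖ ^ 2 + ‖w y‖ ^ 2)
          + ⟪orrSommerfeld n α β J w φ y, rayleigh β w φ y⟫)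
      = ∫ y in (-1 : ℝ)..1, β * (n * (‖deriv w y‖ ^ 2 + α ^ 2 * ‖w y‖ ^ 2)) := by
    refine integral_eq_of_hasDerivAt_sub (by norm_num) (by fun_prop) (by fun_prop)
      (G := fun y => n * (2 * ⟪w y, deriv φ y⟫ - ⟪deriv w y, rayleigh β w φ y⟫
        - y * ‖w y‖ ^ 2)) (fun y hy => ?_)
      (by simp [h.rayleigh_left, h.rayleigh_right, h.vorticity_left, h.vorticity_right])
    refine ((((((h.hasDerivAt_vorticity y).inner ℝ (h.hasDerivAt_deriv_stream hy)).const_mul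
      2).sub ((h.hasDerivAt_deriv_vorticity y).inner ℝ (h.hasDerivAt_rayleigh β y))).sub
      ((hasDerivAt_id y).mul (h.hasDerivAt_vorticity y).norm_sq)).const_mul n).congr_deriv ?_
    simp only [orrSommerfeld, inner_add_left, hJ]
    simp only [rayleigh, rayleighCommutator, inner_add_right, inner_sub_left, inner_sub_right,
      real_inner_smul_left, real_inner_smul_right, real_inner_self_eq_norm_sq, norm_smul, mul_pow,
      Real.norm_eq_abs, sq_abs, id, real_inner_comm (deriv w y) (w y)]
    ring
  rw [integral_add_of_continuous (by fun_prop) (by fun_prop)] at integrated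
  simp only [intervalIntegral.integral_const_mul] at integrated
  rw [integral_add_of_continuous (by fun_prop) (by fun_prop),
    integral_add_of_continuous (by fun_prop) (by fun_prop),
    integral_add_of_continuous (by fun_prop) (by fun_prop)] at integrated
  simp only [intervalIntegral.integral_const_mul, ← l2Norm_sq] at integrated
  rw [l2GradNorm_sq, l2Inner]
  linarith

theorem l2Norm_rayleighCommutator_sq_add (h : IsStreamPair α w φ) :
    l2Norm (rayleighCommutator w φ) ^ 2 + α ^ 2 * l2Norm φ ^ 2
      = l2Inner (rayleigh β w φ) (fun y => y • deriv w y)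
        + 1 / 2 * l2Inner (rayleigh β w φ) w := by
  have := h.continuous_vorticity
  have := h.continuous_deriv_vorticity
  have := h.continuous_stream
  have := h.continuous_rayleigh β
  have := h.continuous_rayleighCommutator
  have integrated : ∫ y in (-1 : ℝ)..1, (‖rayleighCommutator w φ y‖ ^ 2 + α ^ 2 * ‖φ y‖ ^ 2)
      = ∫ y in (-1 : ℝ)..1, (⟪rayleigh β w φ y, y • deriv w y⟫
        + 1 / 2 * ⟪rayleigh β w φ y, w y⟫) := by
    refine integral_eq_of_hasDerivAt_sub (by norm_num) (by fun_prop) (by fun_prop)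
      (G := fun y => ⟪φ y, deriv φ y⟫ - 1 / 2 * (y * ⟪rayleigh β w φ y, w y⟫)
        - y * ⟪φ y, w y⟫) (fun y hy => ?_)
      (by simp [h.stream_left, h.stream_right, h.vorticity_left, h.vorticity_right])
    refine ((((h.hasDerivAt_stream y).inner ℝ (h.hasDerivAt_deriv_stream hy)).sub
      (((hasDerivAt_id y).mul ((h.hasDerivAt_rayleigh β y).inner ℝ
        (h.hasDerivAt_vorticity y))).const_mul (1 / 2))).sub ((hasDerivAt_id y).mul
      ((h.hasDerivAt_stream y).inner ℝ (h.hasDerivAt_vorticity y)))).congr_deriv ?_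
    simp only [← real_inner_self_eq_norm_sq, rayleigh, rayleighCommutator, inner_add_left,
      inner_add_right, inner_sub_left, inner_sub_right, real_inner_smul_left,
      real_inner_smul_right, id, real_inner_comm (deriv w y) (w y),
      real_inner_comm (w y) (deriv φ y)]
    ring
  rw [integral_add_of_continuous (by fun_prop) (by fun_prop),
    integral_add_of_continuous (by fun_prop) (by fun_prop)] at integrated
  simpa only [intervalIntegral.integral_const_mul, ← l2Norm_sq, l2Inner] using integrated

theorem weighted_stream_energy_eq (h : IsStreamPair α w φ) :
    l2Norm (fun y => y • deriv φ y) ^ 2 + α ^ 2 * l2Norm (fun y => y • φ y) ^ 2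
      = 3 / 2 * l2Norm φ ^ 2 - l2Inner (fun y => y • φ y) (rayleighCommutator w φ) := by
  have := h.continuous_stream
  have := h.continuous_deriv_stream
  have := h.continuous_rayleighCommutator
  have integrated : ∫ y in (-1 : ℝ)..1, (‖y • deriv φ y‖ ^ 2 + α ^ 2 * ‖y • φ y‖ ^ 2
        + ⟪y • φ y, rayleighCommutator w φ y⟫)
      = ∫ y in (-1 : ℝ)..1, 3 / 2 * ‖φ y‖ ^ 2 := by
    refine integral_eq_of_hasDerivAt_sub (by norm_num) (by fun_prop) (by fun_prop)
      (G := fun y => y ^ 2 * ⟪φ y, deriv φ y⟫ - 3 / 2 * (y * ‖φ y‖ ^ 2)) (fun y hy => ?_)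
      (by simp [h.stream_left, h.stream_right])
    refine (((hasDerivAt_pow 2 y).mul ((h.hasDerivAt_stream y).inner ℝ
      (h.hasDerivAt_deriv_stream hy))).sub (((hasDerivAt_id y).mul
        (h.hasDerivAt_stream y).norm_sq).const_mul (3 / 2))).congr_deriv ?_
    simp only [rayleighCommutator, inner_add_right, inner_sub_right, real_inner_smul_left,
      real_inner_smul_right, real_inner_self_eq_norm_sq, norm_smul, mul_pow, Real.norm_eq_abs,
      sq_abs, id]
    push_cast
    ring
  rw [integral_add_of_continuous (by fun_prop) (by fun_prop),
    integral_add_of_continuous (by fun_prop) (by fun_prop)] at integrated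
  simp only [intervalIntegral.integral_const_mul, ← l2Norm_sq] at integrated
  rw [l2Inner]
  linarith

theorem mul_l2Norm_vorticity_sq (h : IsStreamPair α w φ) :
    β * l2Norm w ^ 2 = l2Inner (rayleigh β w φ) w + (l2Norm (rayleighCommutator w φ) ^ 2
      + 5 * l2Norm (fun y => y • deriv φ y) ^ 2
      + 2 * l2Inner (fun y => y • deriv φ y) (fun y => y • rayleighCommutator w φ y)
      + 3 * α ^ 2 * (l2Norm φ ^ 2 - l2Norm (fun y => y • φ y) ^ 2)) := by
  have := h.continuous_vorticity
  have := h.continuous_stream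
  have := h.continuous_deriv_stream
  have := h.continuous_rayleigh β
  have := h.continuous_rayleighCommutator
  have integrated : ∫ y in (-1 : ℝ)..1, (β * ‖w y‖ ^ 2 + 3 * α ^ 2 * ‖y • φ y‖ ^ 2)
      = ∫ y in (-1 : ℝ)..1, (⟪rayleigh β w φ y, w y⟫ + ‖rayleighCommutator w φ y‖ ^ 2
        + 5 * ‖y • deriv φ y‖ ^ 2 + 2 * ⟪y • deriv φ y, y • rayleighCommutator w φ y⟫
        + 3 * α ^ 2 * ‖φ y‖ ^ 2) := by
    refine integral_eq_of_hasDerivAt_sub (by norm_num) (by fun_prop) (by fun_prop)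
      (G := fun y => (y - y ^ 3) * (‖deriv φ y‖ ^ 2 - α ^ 2 * ‖φ y‖ ^ 2)
        - 2 * ⟪φ y, deriv φ y⟫) (fun y hy => ?_) (by norm_num [h.stream_left, h.stream_right])
    refine ((((hasDerivAt_id y).sub (hasDerivAt_pow 3 y)).mul
      ((h.hasDerivAt_deriv_stream hy).norm_sq.sub
        ((h.hasDerivAt_stream y).norm_sq.const_mul (α ^ 2)))).sub
      (((h.hasDerivAt_stream y).inner ℝ
        (h.hasDerivAt_deriv_stream hy)).const_mul 2)).congr_deriv ?_
    simp only [rayleigh, rayleighCommutator, norm_smul, mul_pow, Real.norm_eq_abs, sq_abs, id,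
      Pi.sub_apply, ← real_inner_self_eq_norm_sq, inner_add_left, inner_add_right, inner_sub_left,
      inner_sub_right, real_inner_smul_left, real_inner_smul_right,
      real_inner_comm (w y) (deriv φ y), real_inner_comm (deriv φ y) (φ y)]
    push_cast
    ring
  repeat rw [integral_add_of_continuous (by fun_prop) (by fun_prop)] at integrated
  simp only [intervalIntegral.integral_const_mul, ← l2Norm_sq] at integrated
  rw [l2Inner, l2Inner]
  linarith

/-! ### Energy inequalities -/

theorem mul_l2GradNorm_sq_le (h : IsStreamPair α w φ) (hJ : ∀ u, ⟪J u, u⟫ = 0) :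
    n * l2GradNorm α w ^ 2 ≤ l2Norm (orrSommerfeld n α β J w φ) * l2Norm w :=
  h.l2Inner_orrSommerfeld_vorticity hJ ▸
    l2Inner_le (h.continuous_orrSommerfeld n β J) h.continuous_vorticity

theorem l2Norm_rayleigh_sq_le (h : IsStreamPair α w φ) (hn : 0 ≤ n) (hJ : ∀ u, ⟪J u, u⟫ = 0)
    (hJ_norm : ∀ u, ‖J u‖ = ‖u‖) :
    l2Norm (rayleigh β w φ) ^ 2
      ≤ l2Norm (rayleigh β w φ) * l2Norm (orrSommerfeld n α β J w φ)
        + 2 * (n * l2Norm (deriv w) * l2Norm (rayleighCommutator w φ)) := by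
  have l2Norm_J_comp (g : ℝ → E) : l2Norm (J ∘ g) = l2Norm g :=
    l2Norm_congr fun y _ => hJ_norm (g y)
  have forcing := l2Inner_le (h.continuous_orrSommerfeld n β J)
    (J.continuous.comp (h.continuous_rayleigh β))
  have commutator := mul_le_mul_of_nonneg_left (l2Inner_le h.continuous_deriv_vorticity
    (J.continuous.comp h.continuous_rayleighCommutator)) hn
  rw [l2Norm_J_comp] at forcing commutator
  rw [h.l2Norm_rayleigh_sq (n := n) hJ hJ_norm]
  linarith

theorem mul_l2Norm_id_smul_deriv_sq_le (h : IsStreamPair α w φ) (hn : 0 ≤ n)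
    (hJ : ∀ u, ⟪J u, u⟫ = 0) :
    n * l2Norm (fun y => y • deriv w y) ^ 2
      ≤ (|β| * l2Norm w + l2Norm (rayleigh β w φ)) * l2Norm (orrSommerfeld n α β J w φ) := by
  have energy : β * (n * l2GradNorm α w ^ 2)
      ≤ |β| * (l2Norm (orrSommerfeld n α β J w φ) * l2Norm w) :=
    mul_le_mul (le_abs_self β) (h.mul_l2GradNorm_sq_le hJ) (by positivity) (abs_nonneg β)
  have forcing := neg_le_of_abs_le
    (abs_l2Inner_le (h.continuous_orrSommerfeld n β J) (h.continuous_rayleigh β))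
  have dropped : 0 ≤ n * (α ^ 2 * l2Norm (fun y => y • w y) ^ 2 + l2Norm w ^ 2) := by positivity
  linarith [h.l2Inner_orrSommerfeld_rayleigh (β := β) (n := n) hJ]

theorem l2Norm_rayleighCommutator_sq_add_le (h : IsStreamPair α w φ) :
    l2Norm (rayleighCommutator w φ) ^ 2 + α ^ 2 * l2Norm φ ^ 2
      ≤ 2 * (l2Norm (rayleigh β w φ) * l2Norm (fun y => y • deriv w y)) := by
  have := h.continuous_deriv_vorticity
  have derivative_term := l2Inner_le (h.continuous_rayleigh β)
    (show Continuous fun y => y • deriv w y by fun_prop)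
  have zeroth_order_term := l2Inner_le (h.continuous_rayleigh β) h.continuous_vorticity
  have vorticity_le := mul_le_mul_of_nonneg_left (l2Norm_le_two_mul_l2Norm_id_smul_deriv
    (h.contDiff_vorticity.of_le one_le_two) h.vorticity_left h.vorticity_right)
    (l2Norm_nonneg (rayleigh β w φ))
  rw [h.l2Norm_rayleighCommutator_sq_add (β := β)]
  linarith

theorem weighted_stream_energy_le (h : IsStreamPair α w φ) (hα : 1 ≤ α) :
    l2Norm (fun y => y • deriv φ y) ^ 2
      ≤ 2 * (l2Norm (rayleighCommutator w φ) ^ 2 + α ^ 2 * l2Norm φ ^ 2) := by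
  have := h.continuous_stream
  have cauchy_schwarz := neg_le_of_abs_le (abs_l2Inner_le
    (show Continuous fun y => y • φ y by fun_prop) h.continuous_rayleighCommutator)
  have weight_le : l2Norm (fun y => y • φ y) * l2Norm (rayleighCommutator w φ)
      ≤ l2Norm φ * l2Norm (rayleighCommutator w φ) :=
    mul_le_mul_of_nonneg_right (l2Norm_id_smul_le h.continuous_stream) (l2Norm_nonneg _)
  have stream_le : l2Norm φ ^ 2 ≤ α ^ 2 * l2Norm φ ^ 2 :=
    le_mul_of_one_le_left (sq_nonneg _) (one_le_pow₀ hα)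
  have dropped : 0 ≤ α ^ 2 * l2Norm (fun y => y • φ y) ^ 2 := by positivity
  linarith [h.weighted_stream_energy_eq, two_mul_le_add_sq (l2Norm φ)
    (l2Norm (rayleighCommutator w φ)), sq_nonneg (l2Norm (rayleighCommutator w φ))]

theorem abs_mul_l2Norm_vorticity_sq_le (h : IsStreamPair α w φ) (hα : 1 ≤ α) :
    |β| * l2Norm w ^ 2 ≤ l2Norm (rayleigh β w φ) * l2Norm w
      + 30 * (l2Norm (rayleigh β w φ) * l2Norm (fun y => y • deriv w y)) := by
  have := h.continuous_deriv_stream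
  have := h.continuous_rayleighCommutator
  have forcing := abs_l2Inner_le (h.continuous_rayleigh β) h.continuous_vorticity
  have cross := abs_l2Inner_le (show Continuous fun y => y • deriv φ y by fun_prop)
    (show Continuous fun y => y • rayleighCommutator w φ y by fun_prop)
  have weight_le : l2Norm (fun y => y • deriv φ y)
      * l2Norm (fun y => y • rayleighCommutator w φ y)
      ≤ l2Norm (fun y => y • deriv φ y) * l2Norm (rayleighCommutator w φ) :=
    mul_le_mul_of_nonneg_left (l2Norm_id_smul_le h.continuous_rayleighCommutator)
      (l2Norm_nonneg _)
  have stream_nonneg : 0 ≤ α ^ 2 * l2Norm (fun y => y • φ y) ^ 2 := by positivity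
  have stream_le : α ^ 2 * l2Norm (fun y => y • φ y) ^ 2 ≤ α ^ 2 * l2Norm φ ^ 2 :=
    mul_le_mul_of_nonneg_left (pow_le_pow_left₀ (l2Norm_nonneg _)
      (l2Norm_id_smul_le h.continuous_stream) 2) (sq_nonneg α)
  rw [abs_le] at forcing cross
  have weighted := h.weighted_stream_energy_le hα
  have commutator := h.l2Norm_rayleighCommutator_sq_add_le (β := β)
  have young := two_mul_le_add_sq (l2Norm fun y => y • deriv φ y)
    (l2Norm (rayleighCommutator w φ))
  rw [← abs_of_nonneg (sq_nonneg (l2Norm w)), ← abs_mul, h.mul_l2Norm_vorticity_sq, abs_le]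
  constructor <;>
    linarith [sq_nonneg (l2Norm fun y => y • deriv φ y),
      sq_nonneg (l2Norm (rayleighCommutator w φ))]

end IsStreamPair
end EnergyMethod

/-! ### The closed algebraic system -/

section Bootstrap

-- In the application `ω = m δ ‖w‖`, `ρ = ‖r‖`, `ξ = δ² ‖y w'‖`, `ζ = m δ² ‖w'‖`, `μ = δ ‖v‖`, where
-- `r` is the Rayleigh operator and `v` its commutator field, and `F` is the norm of the forcing.
variable {ω ρ ξ ζ μ F : ℝ}

theorem bootstrap_vorticity_le (hω : 0 ≤ ω) (hρ : 0 ≤ ρ) (hF : 0 ≤ F)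
    (hξ_sq : ξ ^ 2 ≤ (ω + ρ) * F)
    (hω_sq : ω ^ 2 ≤ 8 * (ρ * ω) + 240 * (ρ * ξ) ∨ ω ≤ 6 * ξ) : ω ≤ 100 * (F + ρ) := by
  by_contra! hlarge
  have ξ_le : ξ ≤ ω / 9 := by
    refine le_of_sq_le_sq (hξ_sq.trans ?_) (by positivity)
    calc (ω + ρ) * F ≤ (ω + ω / 100) * (ω / 100) := by gcongr <;> linarith
      _ ≤ (ω / 9) ^ 2 := by nlinarith [sq_nonneg ω]
  rcases hω_sq with hω_sq | hω_le
  · have self_bound : ω * ω ≤ (8 * ρ + 240 / 9 * ρ) * ω := by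
      linarith [mul_le_mul_of_nonneg_left ξ_le hρ]
    linarith [le_of_mul_le_mul_right self_bound (by linarith)]
  · linarith

theorem bootstrap_mul_pow_four_le (hω : 0 ≤ ω) (hρ : 0 ≤ ρ) (hF : 0 ≤ F)
    (hξ_sq : ξ ^ 2 ≤ (ω + ρ) * F) (hζ_sq : ζ ^ 2 ≤ ω * F) (hμ_sq : μ ^ 2 ≤ 2 * (ρ * ξ))
    (hω_le : ω ≤ 100 * (F + ρ)) : (ζ * μ) ^ 4 ≤ 4 * 100 ^ 2 * 101 * ((F + ρ) ^ 5 * F ^ 3) := by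
  calc (ζ * μ) ^ 4 = (ζ ^ 2) ^ 2 * (μ ^ 2) ^ 2 := by ring
    _ ≤ (ω * F) ^ 2 * (2 * (ρ * ξ)) ^ 2 := by gcongr
    _ = 4 * (ω * F) ^ 2 * ρ ^ 2 * ξ ^ 2 := by ring
    _ ≤ 4 * (ω * F) ^ 2 * ρ ^ 2 * ((ω + ρ) * F) := by gcongr
    _ ≤ 4 * (100 * (F + ρ) * F) ^ 2 * (F + ρ) ^ 2 * (101 * (F + ρ) * F) := by
        gcongr <;> linarith
    _ = 4 * 100 ^ 2 * 101 * ((F + ρ) ^ 5 * F ^ 3) := by ring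

theorem bootstrap_forcing_add_rayleigh_le (hρ : 0 ≤ ρ) (hF : 0 ≤ F)
    (hρ_sq : ρ ^ 2 ≤ ρ * F + 2 * (ζ * μ))
    (hζμ : (ζ * μ) ^ 4 ≤ 4 * 100 ^ 2 * 101 * ((F + ρ) ^ 5 * F ^ 3)) : F + ρ ≤ 2000 * F := by
  by_contra! hlarge
  have absorbed : (F + ρ) ^ 2 / 4 ≤ ζ * μ := by nlinarith
  have power_eight : (F + ρ) ^ 5 * ((F + ρ) ^ 3)
      ≤ (F + ρ) ^ 5 * (256 * 4 * 100 ^ 2 * 101 * F ^ 3) := by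
    linarith [pow_le_pow_left₀ (by positivity) absorbed 4]
  have cube_le : (F + ρ) ^ 3 ≤ (2000 * F) ^ 3 := by
    have := le_of_mul_le_mul_left power_eight (pow_pos (by linarith) 5)
    linarith [pow_nonneg hF 3]
  exact hlarge.not_ge (le_of_pow_le_pow_left₀ three_ne_zero (by positivity) cube_le)

theorem bootstrap_bound (hω : 0 ≤ ω) (hρ : 0 ≤ ρ) (hF : 0 ≤ F)
    (hξ_sq : ξ ^ 2 ≤ (ω + ρ) * F) (hζ_sq : ζ ^ 2 ≤ ω * F)
    (hρ_sq : ρ ^ 2 ≤ ρ * F + 2 * (ζ * μ)) (hμ_sq : μ ^ 2 ≤ 2 * (ρ * ξ))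
    (hω_sq : ω ^ 2 ≤ 8 * (ρ * ω) + 240 * (ρ * ξ) ∨ ω ≤ 6 * ξ) : ω ≤ 200000 * F := by
  have ω_le := bootstrap_vorticity_le hω hρ hF hξ_sq hω_sq
  linarith [bootstrap_forcing_add_rayleigh_le hρ hF hρ_sq
    (bootstrap_mul_pow_four_le hω hρ hF hξ_sq hζ_sq hμ_sq ω_le)]

end Bootstrap

/-! ### Scales of the critical layer -/

section LayerScale

/-- The weight `m = |λ - 1|^{1/2} + n^{1/4}` of the resolvent estimate, where `n = ν/|k₁|`. -/
def criticalWeight (n : ℝ) (lam : ℂ) : ℝ := √‖lam - 1‖ + n ^ ((1 : ℝ) / 4)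

/-- The thickness `δ = (n/m)^{1/3}` of the layer in which viscosity balances a shear of slope
`m`. -/
def layerWidth (n : ℝ) (lam : ℂ) : ℝ := (n / criticalWeight n lam) ^ ((1 : ℝ) / 3)

/-- What the energy method uses about a weight `m` and a layer thickness `δ` for viscosity `n` and
`β = 1 - Re λ`.  The last field separates the case of a nondegenerate shear from that of a layer
filling the critical region. -/
structure LayerScale (n β m δ : ℝ) : Prop where
  weight_pos : 0 < m
  width_pos : 0 < δ
  viscosity_eq : n = m * δ ^ 3
  width_le_weight : δ ≤ m
  abs_le_weight_sq : |β| ≤ m ^ 2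
  weight_le : m ^ 2 ≤ 8 * |β| ∨ m ≤ 3 * δ

theorem LayerScale.sqrt_viscosity_le {n β m δ : ℝ} (h : LayerScale n β m δ) : √n ≤ m * δ := by
  have := h.weight_pos
  have := h.width_pos
  refine Real.sqrt_le_iff.mpr ⟨by positivity, ?_⟩
  calc n = m * δ ^ 2 * δ := by rw [h.viscosity_eq]; ring
    _ ≤ m * δ ^ 2 * m := by gcongr; exact h.width_le_weight
    _ = (m * δ) ^ 2 := by ring

theorem criticalWeight_pos {n : ℝ} (hn : 0 < n) (lam : ℂ) : 0 < criticalWeight n lam :=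
  add_pos_of_nonneg_of_pos (Real.sqrt_nonneg _) (by positivity)

theorem layerWidth_pos {n : ℝ} (hn : 0 < n) (lam : ℂ) : 0 < layerWidth n lam :=
  Real.rpow_pos_of_pos (div_pos hn (criticalWeight_pos hn lam)) _

theorem viscosity_eq_criticalWeight_mul_layerWidth_cube {n : ℝ} (hn : 0 < n) (lam : ℂ) :
    n = criticalWeight n lam * layerWidth n lam ^ 3 := by
  have m_pos := criticalWeight_pos hn lam
  have width_cube : layerWidth n lam ^ 3 = n / criticalWeight n lam := by
    rw [layerWidth, one_div]
    exact_mod_cast Real.rpow_inv_natCast_pow (div_pos hn m_pos).le three_ne_zero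
  rw [width_cube, mul_div_cancel₀ _ m_pos.ne']

theorem weight_sq_le_or_le_width {s q c δ : ℝ} (hs : 0 ≤ s) (hq : 0 < q) (hδ : 0 ≤ δ)
    (hwidth : q ^ 4 = (s + q) * δ ^ 3) (hc : s ^ 2 ≤ c + q ^ 2 / 2) :
    (s + q) ^ 2 ≤ 8 * c ∨ s + q ≤ 3 * δ := by
  rcases le_total q s with hqs | hsq
  · left
    have q_sq_le : q ^ 2 ≤ s ^ 2 := by gcongr
    calc (s + q) ^ 2 ≤ (s + s) ^ 2 := by gcongr
      _ ≤ 8 * c := by linarith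
  · right
    have fourth_power : (s + q) * (s + q) ^ 3 ≤ (s + q) * (16 * δ ^ 3) :=
      calc (s + q) * (s + q) ^ 3 = (s + q) ^ 4 := by ring
        _ ≤ (q + q) ^ 4 := by gcongr
        _ = (s + q) * (16 * δ ^ 3) := by linear_combination 16 * hwidth
    refine le_of_pow_le_pow_left₀ three_ne_zero (by positivity) ?_
    linarith [le_of_mul_le_mul_left fourth_power (by positivity), pow_nonneg hδ 3]

theorem layerScale_layerWidth {n : ℝ} {lam : ℂ} (hn : 0 < n) (him : |lam.im| ≤ √n / 2) :
    LayerScale n (1 - lam.re) (criticalWeight n lam) (layerWidth n lam) := by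
  have m_pos := criticalWeight_pos hn lam
  have root_pos : 0 < n ^ ((1 : ℝ) / 4) := by positivity
  have root_pow : (n ^ ((1 : ℝ) / 4)) ^ 4 = n := by
    rw [one_div]; exact_mod_cast Real.rpow_inv_natCast_pow hn.le four_ne_zero
  have root_sq : (n ^ ((1 : ℝ) / 4)) ^ 2 = √n := by
    rw [← Real.rpow_mul_natCast hn.le, Real.sqrt_eq_rpow]
    norm_num
  have width_pos := layerWidth_pos hn lam
  have viscosity_eq := viscosity_eq_criticalWeight_mul_layerWidth_cube hn lam
  have abs_re : |1 - lam.re| = |(lam - 1).re| := by rw [abs_sub_comm]; simp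
  have sqrt_sq : √‖lam - 1‖ ^ 2 = ‖lam - 1‖ := Real.sq_sqrt (norm_nonneg _)
  refine ⟨m_pos, width_pos, viscosity_eq, ?_, ?_, ?_⟩
  · have viscosity_le : n ≤ criticalWeight n lam ^ 4 := by
      nth_rw 1 [← root_pow]
      exact pow_le_pow_left₀ root_pos.le (le_add_of_nonneg_left (Real.sqrt_nonneg _)) 4
    refine le_of_pow_le_pow_left₀ three_ne_zero m_pos.le (le_of_mul_le_mul_left ?_ m_pos)
    linarith
  · calc |1 - lam.re| ≤ √‖lam - 1‖ ^ 2 := by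
          rw [abs_re, sqrt_sq]; exact Complex.abs_re_le_norm _
      _ ≤ criticalWeight n lam ^ 2 := by
          gcongr; exact le_add_of_nonneg_right root_pos.le
  · refine weight_sq_le_or_le_width (Real.sqrt_nonneg _) root_pos width_pos.le
      (root_pow.trans viscosity_eq) ?_
    rw [sqrt_sq, root_sq, abs_re]
    refine (Complex.norm_le_abs_re_add_abs_im _).trans (add_le_add_right ?_ _)
    simpa using him

end LayerScale

/-! ### Resolvent estimate in critical-layer units -/

section Resolvent

open scoped InnerProductSpace RealInnerProductSpace

variable {E : Type*} [NormedAddCommGroup E] [InnerProductSpace ℝ E]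

namespace IsStreamPair

variable {n α β m δ : ℝ} {w φ : ℝ → E} {J : E →L[ℝ] E}

theorem rescaled_l2Norm_id_smul_deriv_sq_le (h : IsStreamPair α w φ) (hJ : ∀ u, ⟪J u, u⟫ = 0)
    (hscale : LayerScale n β m δ) :
    (δ ^ 2 * l2Norm (fun y => y • deriv w y)) ^ 2
      ≤ (m * δ * l2Norm w + l2Norm (rayleigh β w φ)) * l2Norm (orrSommerfeld n α β J w φ) := by
  have m_pos := hscale.weight_pos
  have δ_pos := hscale.width_pos
  have hn : 0 ≤ n := hscale.viscosity_eq ▸ by positivity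
  have := l2Norm_nonneg w
  have := l2Norm_nonneg (rayleigh β w φ)
  have := l2Norm_nonneg (orrSommerfeld n α β J w φ)
  refine le_of_mul_le_mul_left ?_ m_pos
  calc m * (δ ^ 2 * l2Norm (fun y => y • deriv w y)) ^ 2
      = δ * (n * l2Norm (fun y => y • deriv w y) ^ 2) := by rw [hscale.viscosity_eq]; ring
    _ ≤ δ * ((|β| * l2Norm w + l2Norm (rayleigh β w φ))
          * l2Norm (orrSommerfeld n α β J w φ)) := by
        exact mul_le_mul_of_nonneg_left (h.mul_l2Norm_id_smul_deriv_sq_le hn hJ) δ_pos.le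
    _ = (δ * |β| * l2Norm w + δ * l2Norm (rayleigh β w φ))
          * l2Norm (orrSommerfeld n α β J w φ) := by ring
    _ ≤ (δ * m ^ 2 * l2Norm w + m * l2Norm (rayleigh β w φ))
          * l2Norm (orrSommerfeld n α β J w φ) := by
        gcongr
        exacts [hscale.abs_le_weight_sq, hscale.width_le_weight]
    _ = m * ((m * δ * l2Norm w + l2Norm (rayleigh β w φ))
          * l2Norm (orrSommerfeld n α β J w φ)) := by ring

theorem rescaled_l2Norm_vorticity_bound (h : IsStreamPair α w φ) (hα : 1 ≤ α)
    (hscale : LayerScale n β m δ) :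
    (m * δ * l2Norm w) ^ 2 ≤ 8 * (l2Norm (rayleigh β w φ) * (m * δ * l2Norm w))
        + 240 * (l2Norm (rayleigh β w φ) * (δ ^ 2 * l2Norm (fun y => y • deriv w y)))
      ∨ m * δ * l2Norm w ≤ 6 * (δ ^ 2 * l2Norm (fun y => y • deriv w y)) := by
  have δ_pos := hscale.width_pos
  have w_nonneg := l2Norm_nonneg w
  have r_nonneg := l2Norm_nonneg (rayleigh β w φ)
  rcases hscale.weight_le with shear | layer
  · left
    calc (m * δ * l2Norm w) ^ 2 = δ ^ 2 * (m ^ 2 * l2Norm w ^ 2) := by ring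
      _ ≤ δ ^ 2 * (8 * |β| * l2Norm w ^ 2) := by gcongr
      _ = 8 * δ ^ 2 * (|β| * l2Norm w ^ 2) := by ring
      _ ≤ 8 * δ ^ 2 * (l2Norm (rayleigh β w φ) * l2Norm w
            + 30 * (l2Norm (rayleigh β w φ) * l2Norm (fun y => y • deriv w y))) := by
          gcongr; exact h.abs_mul_l2Norm_vorticity_sq_le hα
      _ = 8 * (l2Norm (rayleigh β w φ) * (δ * δ * l2Norm w))
            + 240 * (l2Norm (rayleigh β w φ)
              * (δ ^ 2 * l2Norm (fun y => y • deriv w y))) := by ring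
      _ ≤ _ := by gcongr; exact hscale.width_le_weight
  · right
    calc m * δ * l2Norm w ≤ 3 * δ * δ * (2 * l2Norm (fun y => y • deriv w y)) := by
          gcongr
          exact l2Norm_le_two_mul_l2Norm_id_smul_deriv
            (h.contDiff_vorticity.of_le one_le_two) h.vorticity_left h.vorticity_right
      _ = 6 * (δ ^ 2 * l2Norm (fun y => y • deriv w y)) := by ring

theorem weight_mul_width_mul_l2Norm_le (h : IsStreamPair α w φ) (hα : 1 ≤ α)
    (hJ : ∀ u, ⟪J u, u⟫ = 0) (hJ_norm : ∀ u, ‖J u‖ = ‖u‖) (hscale : LayerScale n β m δ) :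
    m * δ * l2Norm w ≤ 200000 * l2Norm (orrSommerfeld n α β J w φ) := by
  have m_pos := hscale.weight_pos
  have δ_pos := hscale.width_pos
  have hn : 0 ≤ n := hscale.viscosity_eq ▸ by positivity
  refine bootstrap_bound (ρ := l2Norm (rayleigh β w φ)) (ζ := m * δ ^ 2 * l2Norm (deriv w))
    (μ := δ * l2Norm (rayleighCommutator w φ)) (mul_nonneg (by positivity) (l2Norm_nonneg w))
    (l2Norm_nonneg _) (l2Norm_nonneg _) (h.rescaled_l2Norm_id_smul_deriv_sq_le hJ hscale)
    ?_ ?_ ?_ (h.rescaled_l2Norm_vorticity_bound hα hscale)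
  · calc (m * δ ^ 2 * l2Norm (deriv w)) ^ 2 = m * δ * (n * l2Norm (deriv w) ^ 2) := by
          rw [hscale.viscosity_eq]; ring
      _ ≤ m * δ * (n * l2GradNorm α w ^ 2) := by
          gcongr
          exacts [l2Norm_nonneg _, l2Norm_deriv_le_l2GradNorm α w]
      _ ≤ m * δ * (l2Norm (orrSommerfeld n α β J w φ) * l2Norm w) := by
          exact mul_le_mul_of_nonneg_left (h.mul_l2GradNorm_sq_le hJ) (by positivity)
      _ = m * δ * l2Norm w * l2Norm (orrSommerfeld n α β J w φ) := by ring
  · refine (h.l2Norm_rayleigh_sq_le hn hJ hJ_norm).trans_eq ?_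
    rw [hscale.viscosity_eq]
    ring
  · have stream_nonneg : 0 ≤ α ^ 2 * l2Norm φ ^ 2 := by positivity
    calc (δ * l2Norm (rayleighCommutator w φ)) ^ 2
        ≤ δ ^ 2 * (2 * (l2Norm (rayleigh β w φ) * l2Norm (fun y => y • deriv w y))) := by
          rw [mul_pow]
          gcongr
          linarith [h.l2Norm_rayleighCommutator_sq_add_le (β := β)]
      _ = 2 * (l2Norm (rayleigh β w φ)
            * (δ ^ 2 * l2Norm (fun y => y • deriv w y))) := by ring

theorem weight_mul_width_sq_mul_l2GradNorm_le (h : IsStreamPair α w φ) (hα : 1 ≤ α)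
    (hJ : ∀ u, ⟪J u, u⟫ = 0) (hJ_norm : ∀ u, ‖J u‖ = ‖u‖) (hscale : LayerScale n β m δ) :
    m * δ ^ 2 * l2GradNorm α w ≤ 200000 * l2Norm (orrSommerfeld n α β J w φ) := by
  have m_pos := hscale.weight_pos
  have δ_pos := hscale.width_pos
  have forcing_nonneg := l2Norm_nonneg (orrSommerfeld n α β J w φ)
  refine le_of_sq_le_sq ?_ (by positivity)
  calc (m * δ ^ 2 * l2GradNorm α w) ^ 2 = m * δ * (n * l2GradNorm α w ^ 2) := by
        rw [hscale.viscosity_eq]; ring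
    _ ≤ m * δ * (l2Norm (orrSommerfeld n α β J w φ) * l2Norm w) := by
        exact mul_le_mul_of_nonneg_left (h.mul_l2GradNorm_sq_le hJ) (by positivity)
    _ = l2Norm (orrSommerfeld n α β J w φ) * (m * δ * l2Norm w) := by ring
    _ ≤ l2Norm (orrSommerfeld n α β J w φ)
          * (200000 * l2Norm (orrSommerfeld n α β J w φ)) := by
        exact mul_le_mul_of_nonneg_left
          (h.weight_mul_width_mul_l2Norm_le hα hJ hJ_norm hscale) forcing_nonneg
    _ ≤ (200000 * l2Norm (orrSommerfeld n α β J w φ)) ^ 2 := by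
        linarith [sq_nonneg (l2Norm (orrSommerfeld n α β J w φ))]

theorem l2Norm_orrSommerfeld_le_of_shift (h : IsStreamPair α w φ) (hα : 1 ≤ α)
    (hJ : ∀ u, ⟪J u, u⟫ = 0) (hJ_norm : ∀ u, ‖J u‖ = ‖u‖) (hscale : LayerScale n β m δ) {μ : ℝ}
    (hμ : |μ| ≤ √n / 400000) :
    l2Norm (orrSommerfeld n α β J w φ)
      ≤ 2 * l2Norm (fun y => orrSommerfeld n α β J w φ y + μ • w y) := by
  have := h.continuous_vorticity
  have := h.continuous_orrSommerfeld n β J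
  have shift_le : |μ| * l2Norm w ≤ l2Norm (orrSommerfeld n α β J w φ) / 2 :=
    calc |μ| * l2Norm w ≤ m * δ / 400000 * l2Norm w :=
          mul_le_mul_of_nonneg_right (hμ.trans (by gcongr; exact hscale.sqrt_viscosity_le))
            (l2Norm_nonneg w)
      _ ≤ l2Norm (orrSommerfeld n α β J w φ) / 2 := by
          linarith [h.weight_mul_width_mul_l2Norm_le hα hJ hJ_norm hscale]
  have triangle := l2Norm_add_le
    (show Continuous fun y => orrSommerfeld n α β J w φ y + μ • w y by fun_prop)
    (show Continuous fun y => -μ • w y by fun_prop)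
  rw [l2Norm_const_smul (-μ) w, abs_neg] at triangle
  simp only [neg_smul, add_neg_cancel_right] at triangle
  linarith

end IsStreamPair

end Resolvent

/-! ### Complex-valued solutions -/

section ComplexValued

open scoped InnerProductSpace RealInnerProductSpace

theorem one_le_kabs {k₁ : ℤ} (hk₁ : k₁ ≠ 0) (k₃ : ℤ) : 1 ≤ kabs k₁ k₃ := by
  have one_le_sq : (1 : ℝ) ≤ (k₁ : ℝ) ^ 2 := by exact_mod_cast sq_pos_of_ne_zero hk₁
  exact Real.one_le_sqrt.mpr (one_le_sq.trans (le_add_of_nonneg_right (sq_nonneg _)))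

theorem hk_eq_l2GradNorm (k₁ k₃ : ℤ) (w : ℝ → ℂ) : hk k₁ k₃ w = l2GradNorm (kabs k₁ k₃) w := by
  rw [hk, l2GradNorm, l2Norm_sq, l2Norm_sq]

/-- Multiplication by `i k₁/|k₁|` on `ℂ`, as a real-linear operator. -/
def phaseRotation (k₁ : ℤ) : ℂ →L[ℝ] ℂ :=
  ContinuousLinearMap.mul ℝ ℂ (Complex.I * ((k₁ / |(k₁ : ℝ)| : ℝ) : ℂ))

theorem phaseRotation_apply (k₁ : ℤ) (u : ℂ) :
    phaseRotation k₁ u = Complex.I * ((k₁ / |(k₁ : ℝ)| : ℝ) : ℂ) * u := rfl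

theorem inner_phaseRotation_self (k₁ : ℤ) (u : ℂ) : ⟪phaseRotation k₁ u, u⟫ = 0 := by
  have real_inner_I_mul (t : ℝ) : ⟪Complex.I * (t : ℂ) * u, u⟫ = 0 := by
    simp only [Complex.inner, map_mul, Complex.conj_I, Complex.conj_ofReal, Complex.mul_re,
      Complex.mul_im, Complex.neg_re, Complex.neg_im, Complex.I_re, Complex.I_im,
      Complex.ofReal_re, Complex.ofReal_im, Complex.conj_re, Complex.conj_im]
    ring
  exact real_inner_I_mul _

theorem norm_phaseRotation {k₁ : ℤ} (hk₁ : k₁ ≠ 0) (u : ℂ) : ‖phaseRotation k₁ u‖ = ‖u‖ := by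
  have hk : |(k₁ : ℝ)| ≠ 0 := by simpa using hk₁
  simp [phaseRotation_apply, hk]

namespace OSslip

variable {ν : ℝ} {k₁ k₃ : ℤ} {lam : ℂ} {w φ F : ℝ → ℂ}

theorem isStreamPair (h : OSslip ν k₁ k₃ lam w φ F) : IsStreamPair (kabs k₁ k₃) w φ := by
  obtain ⟨hw, hφ, -, helmholtz, φ_left, φ_right, φ''_left, φ''_right⟩ := h
  refine ⟨hw, hφ, fun y hy => ?_, ?_, ?_, φ_left, φ_right⟩
  · rw [← helmholtz y hy, Complex.real_smul]
    push_cast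
    ring
  · rw [← helmholtz (-1) (by norm_num), φ_left, φ''_left, mul_zero, sub_zero]
  · rw [← helmholtz 1 (by norm_num), φ_right, φ''_right, mul_zero, sub_zero]

theorem forcing_eq (h : OSslip ν k₁ k₃ lam w φ F) (hk₁ : k₁ ≠ 0) {y : ℝ}
    (hy : y ∈ Set.Icc (-1 : ℝ) 1) :
    F y = |(k₁ : ℝ)| • (orrSommerfeld (ν / |(k₁ : ℝ)|) (kabs k₁ k₃) (1 - lam.re)
      (phaseRotation k₁) w φ y + (k₁ / |(k₁ : ℝ)| * lam.im) • w y) := by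
  have hk : ((|(k₁ : ℝ)| : ℝ) : ℂ) ≠ 0 := by simpa using hk₁
  rw [← h.2.2.1 y hy]
  nth_rw 1 [← Complex.re_add_im lam]
  simp only [orrSommerfeld, rayleigh, phaseRotation_apply, Complex.real_smul]
  push_cast
  field_simp
  linear_combination (-(k₁ : ℂ) * lam.im * w y) * Complex.I_sq

theorem l2_forcing (h : OSslip ν k₁ k₃ lam w φ F) (hk₁ : k₁ ≠ 0) :
    l2 F = |(k₁ : ℝ)| * l2Norm (fun y => orrSommerfeld (ν / |(k₁ : ℝ)|) (kabs k₁ k₃)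
      (1 - lam.re) (phaseRotation k₁) w φ y + (k₁ / |(k₁ : ℝ)| * lam.im) • w y) := by
  rw [← abs_abs (k₁ : ℝ), ← l2Norm_const_smul, abs_abs]
  exact l2Norm_congr fun y hy => congrArg norm (h.forcing_eq hk₁ hy)

theorem rescaled_bounds (h : OSslip ν k₁ k₃ lam w φ F) (hk₁ : k₁ ≠ 0) {m δ : ℝ}
    (hscale : LayerScale (ν / |(k₁ : ℝ)|) (1 - lam.re) m δ)
    (him : |lam.im| ≤ √(ν / |(k₁ : ℝ)|) / 400000) :
    |(k₁ : ℝ)| * (m * δ ^ 2) * hk k₁ k₃ w ≤ 400000 * l2 F ∧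
      |(k₁ : ℝ)| * (m * δ) * l2 w ≤ 400000 * l2 F := by
  have hα := one_le_kabs hk₁ k₃
  have hJ := inner_phaseRotation_self k₁
  have hJ_norm := fun u => norm_phaseRotation hk₁ u
  have hk : 0 < |(k₁ : ℝ)| := by simpa using hk₁
  have shift_small : |k₁ / |(k₁ : ℝ)| * lam.im| ≤ √(ν / |(k₁ : ℝ)|) / 400000 := by
    rwa [abs_mul, abs_div, abs_abs, div_self hk.ne', one_mul]
  have forcing := mul_le_mul_of_nonneg_left
    (h.isStreamPair.l2Norm_orrSommerfeld_le_of_shift hα hJ hJ_norm hscale shift_small) hk.le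
  have gradient := mul_le_mul_of_nonneg_left
    (h.isStreamPair.weight_mul_width_sq_mul_l2GradNorm_le hα hJ hJ_norm hscale) hk.le
  have vorticity := mul_le_mul_of_nonneg_left
    (h.isStreamPair.weight_mul_width_mul_l2Norm_le hα hJ hJ_norm hscale) hk.le
  rw [h.l2_forcing hk₁, hk_eq_l2GradNorm, show l2 w = l2Norm w from rfl]
  constructor <;> linarith

end OSslip

theorem rpow_two_thirds_mul_rpow_third_mul_rpow_third {K m δ : ℝ} (hK : 0 ≤ K) (hm : 0 ≤ m)
    (hδ : 0 ≤ δ) :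
    (K * (m * δ ^ 3)) ^ ((2 : ℝ) / 3) * K ^ ((1 : ℝ) / 3) * m ^ ((1 : ℝ) / 3)
      = K * (m * δ ^ 2) := by
  calc _ = ((K * (m * δ ^ 2)) ^ 3) ^ ((1 : ℝ) / 3) := by
        rw [show (2 : ℝ) / 3 = (2 : ℕ) * (1 / 3) by norm_num,
          Real.rpow_natCast_mul (by positivity), ← Real.mul_rpow (by positivity) hK,
          ← Real.mul_rpow (by positivity) hm]
        ring_nf
    _ = K * (m * δ ^ 2) := by
        rw [one_div]; exact_mod_cast Real.pow_rpow_inv_natCast (by positivity) three_ne_zero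

theorem rpow_third_mul_rpow_two_thirds_mul_rpow_two_thirds {K m δ : ℝ} (hK : 0 ≤ K)
    (hm : 0 ≤ m) (hδ : 0 ≤ δ) :
    (K * (m * δ ^ 3)) ^ ((1 : ℝ) / 3) * K ^ ((2 : ℝ) / 3) * m ^ ((2 : ℝ) / 3)
      = K * (m * δ) := by
  calc _ = ((K * (m * δ)) ^ 3) ^ ((1 : ℝ) / 3) := by
        rw [show (2 : ℝ) / 3 = (2 : ℕ) * (1 / 3) by norm_num, Real.rpow_natCast_mul hK,
          Real.rpow_natCast_mul hm, ← Real.mul_rpow (by positivity) (by positivity),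
          ← Real.mul_rpow (by positivity) (by positivity)]
        ring_nf
    _ = K * (m * δ) := by
        rw [one_div]; exact_mod_cast Real.pow_rpow_inv_natCast (by positivity) three_ne_zero

end ComplexValued

theorem abs_im_ofReal_sub_I_mul {x t : ℝ} (ht : 0 ≤ t) :
    |((x : ℂ) - Complex.I * (t : ℂ)).im| = t := by
  simp [abs_of_nonneg ht]

theorem OS_slip_resolvent_L2_lambda_weight_general :
    ∃ ε₀ C : ℝ, 0 < ε₀ ∧ ε₀ < 1 ∧ 0 < C ∧
      ∀ (ν : ℝ) (lam : ℂ) (k₁ k₃ : ℤ) (w φ F : ℝ → ℂ),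
        0 < ν → k₁ ≠ 0 → |lam.im| ≤ ε₀ * √(ν / |(k₁ : ℝ)|) → OSslip ν k₁ k₃ lam w φ F →
        ν ^ ((2 : ℝ) / 3) * |(k₁ : ℝ)| ^ ((1 : ℝ) / 3) *
            (√‖lam - 1‖ + (ν / |(k₁ : ℝ)|) ^ ((1 : ℝ) / 4)) ^ ((1 : ℝ) / 3) * hk k₁ k₃ w
          + ν ^ ((1 : ℝ) / 3) * |(k₁ : ℝ)| ^ ((2 : ℝ) / 3) *
            (√‖lam - 1‖ + (ν / |(k₁ : ℝ)|) ^ ((1 : ℝ) / 4)) ^ ((2 : ℝ) / 3) * l2 w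
          ≤ C * l2 F := by
  refine ⟨1 / 400000, 800000, by norm_num, by norm_num, by norm_num, ?_⟩
  intro ν lam k₁ k₃ w φ F hν hk₁ him h
  have hk : 0 < |(k₁ : ℝ)| := by simpa using hk₁
  have hn : 0 < ν / |(k₁ : ℝ)| := div_pos hν hk
  have hscale := layerScale_layerWidth hn
    (him.trans (by linarith [Real.sqrt_nonneg (ν / |(k₁ : ℝ)|)]))
  have bounds := h.rescaled_bounds hk₁ hscale (him.trans_eq (by ring))
  have m_nonneg := hscale.weight_pos.le
  have δ_nonneg := hscale.width_pos.le
  have ν_eq : ν = |(k₁ : ℝ)| * (criticalWeight (ν / |(k₁ : ℝ)|) lam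
      * layerWidth (ν / |(k₁ : ℝ)|) lam ^ 3) := by
    rw [← hscale.viscosity_eq, mul_div_cancel₀ _ hk.ne']
  rw [← criticalWeight]
  generalize criticalWeight (ν / |(k₁ : ℝ)|) lam = m at *
  generalize layerWidth (ν / |(k₁ : ℝ)|) lam = δ at *
  rw [ν_eq, rpow_two_thirds_mul_rpow_third_mul_rpow_third hk.le m_nonneg δ_nonneg,
    rpow_third_mul_rpow_two_thirds_mul_rpow_two_thirds hk.le m_nonneg δ_nonneg]
  linarith

/-- **Weighted resolvent estimate with Navier-slip boundary condition**
(Corollary 2.3): for `λ = λ_r - iεν^{1/2}|k₁|^{-1/2}`,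
`ν^{2/3}|k₁|^{1/3}(|λ-1|^{1/2}+|ν/k₁|^{1/4})^{1/3}‖(∂_y,|k|)w‖_{L²}
 + ν^{1/3}|k₁|^{2/3}(|λ-1|^{1/2}+|ν/k₁|^{1/4})^{2/3}‖w‖_{L²} ≤ C‖F‖_{L²}`. -/
theorem OS_slip_resolvent_L2_lambda_weight :
    ∃ ε₀ ν₀ C : ℝ, 0 < ε₀ ∧ ε₀ < 1 ∧ 0 < ν₀ ∧ ν₀ < 1 ∧ 0 < C ∧
      ∀ (ν ε lamr : ℝ) (lam : ℂ) (k₁ k₃ : ℤ) (w φ F : ℝ → ℂ),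
        0 < ν → ν ≤ ν₀ → 0 ≤ ε → ε ≤ ε₀ → 1 ≤ |k₁| →
        lam = (lamr : ℂ) -
          Complex.I * ((ε * Real.sqrt ν / Real.sqrt |(k₁ : ℝ)| : ℝ) : ℂ) →
        IntervalIntegrable (fun y => ‖F y‖ ^ 2) MeasureTheory.volume (-1) 1 →
        OSslip ν k₁ k₃ lam w φ F →
        ν ^ ((2:ℝ)/3) * |(k₁ : ℝ)| ^ ((1:ℝ)/3) *
            (Real.sqrt ‖lam - 1‖ + (ν / |(k₁ : ℝ)|) ^ ((1:ℝ)/4)) ^ ((1:ℝ)/3) *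
            hk k₁ k₃ w
          + ν ^ ((1:ℝ)/3) * |(k₁ : ℝ)| ^ ((2:ℝ)/3) *
            (Real.sqrt ‖lam - 1‖ + (ν / |(k₁ : ℝ)|) ^ ((1:ℝ)/4)) ^ ((2:ℝ)/3) *
            l2 w
          ≤ C * l2 F := by
  obtain ⟨ε₀, C, hε₀, hε₀_lt, hC, bound⟩ := OS_slip_resolvent_L2_lambda_weight_general
  refine ⟨ε₀, 1 / 2, C, hε₀, hε₀_lt, by norm_num, by norm_num, hC, ?_⟩
  rintro ν ε lamr lam k₁ k₃ w φ F hν - hε hε_le hk₁ rfl - h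
  refine bound ν _ k₁ k₃ w φ F hν (abs_pos.mp hk₁) ?_ h
  rw [abs_im_ofReal_sub_I_mul (by positivity), mul_div_assoc, ← Real.sqrt_div hν.le]
  gcongr

end
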